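/- Set R_n(x) = L(x)^T·P_n(x)·Γ_n^{-1}. Then for all 0 ≤ i,j ≤ 2ℓ: if i > n+j then R_n(x)_{i,j} = 0 for all x, and if i ≤ n+j then R_n(x)_{i,j} = (-1)^i · 2^{-n} · q^{j(2i+1)+2i(2ℓ+n+1)-i²} · [(q²;q²)_n (q^{4ℓ+4};q²)_n / ((q^{2j+2};q²)_n (q^{4ℓ-2j+2};q²)_n)] · [(q^{-4ℓ};q²)_i (q^{-2j-2n};q²)_i / ((q²;q²)_i (q^{4ℓ+4};q²)_i)] · [(q²;q²)_{n+j-i} / (q^{4i+4};q²)_{n+j-i}] · R_i(μ(j);1,1,q^{-2n-2j-2},q^{-4ℓ-2};q²) · C_{n+j-i}(x;q^{2i+2}|q²). In particular every entry of R_n is a scalar multiple of a single continuous q-ultraspherical polynomial. -/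

import Mathlib

open Finset Polynomial MeasureTheory Matrix
open scoped BigOperators ComplexOrder

noncomputable section

/-- q-shifted factorial `(a;p)_n`. -/
def qp (a p : ℂ) (n : ℕ) : ℂ := ∏ j ∈ Finset.range n, (1 - a * p ^ j)

/-- q-Racah polynomial `R_n(μ(x);α,β,γ,δ;p)`. -/
def qRacah (p α β γ δ : ℂ) (n x : ℕ) : ℂ :=
  ∑ k ∈ Finset.range (min n x + 1),
    qp (p ^ (-(n : ℤ))) p k * qp (α * β * p ^ (n + 1)) p k *
        qp (p ^ (-(x : ℤ))) p k * qp (γ * δ * p ^ (x + 1)) p k /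
      (qp (α * p) p k * qp (β * δ * p) p k * qp (γ * p) p k * qp p p k) * p ^ k

/-- `IsUltra C` says that for each base `p`, parameter `β` and degree `n`, `C p β n` is
the continuous q-ultraspherical polynomial: it has degree at most `n` and its values at
`(z+z⁻¹)/2` are given by the symmetric Laurent sum. -/
def IsUltra (C : ℂ → ℂ → ℕ → Polynomial ℂ) : Prop :=
  ∀ (p β : ℂ) (n : ℕ),
    (C p β n).degree ≤ (n : ℕ) ∧
      ∀ z : ℂ, z ≠ 0 →
        (C p β n).eval ((z + z⁻¹) / 2) =
          ∑ r ∈ Finset.range (n + 1),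
            qp β p r * qp β p (n - r) / (qp p p r * qp p p (n - r)) * z ^ ((n : ℤ) - 2 * r)

/-- The matrix-valued polynomial `P_n` (entries in `Polynomial ℂ`); here `L = 2ℓ`. -/
def Pm (q : ℂ) (L : ℕ) (C : ℂ → ℂ → ℕ → Polynomial ℂ) (n : ℕ) :
    Matrix (Fin (L + 1)) (Fin (L + 1)) (Polynomial ℂ) :=
  Matrix.of fun i j =>
    ∑ k ∈ Finset.Icc (i : ℕ) (min L (n + (j : ℕ))),
      Polynomial.C
          ((-1 : ℂ) ^ k *
            q ^ ((n : ℤ) + (2 * (k : ℤ) + 1) * ((k : ℤ) - ((i : ℕ) : ℤ)) +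
                ((j : ℕ) : ℤ) * (2 * (k : ℤ) + 1) + 2 * (k : ℤ) * ((L : ℤ) + (n : ℤ) + 1) -
                (k : ℤ) ^ 2) *
            (qp (q ^ 2) (q ^ 2) k * qp (q ^ 2) (q ^ 2) (k + (i : ℕ)) /
              (qp (q ^ 2) (q ^ 2) (2 * k) * qp (q ^ 2) (q ^ 2) (i : ℕ))) *
            (qp (q ^ (-(2 * (L : ℤ)))) (q ^ 2) k *
                qp (q ^ (-(2 * ((j : ℕ) : ℤ) + 2 * (n : ℤ)))) (q ^ 2) k /
              (qp (q ^ 2) (q ^ 2) k * qp (q ^ (2 * (L : ℤ) + 4)) (q ^ 2) k)) *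
            (qp (q ^ 2) (q ^ 2) (n + (j : ℕ) - k) /
              qp (q ^ (4 * (k : ℤ) + 4)) (q ^ 2) (n + (j : ℕ) - k)) *
            qRacah (q ^ 2) 1 1 (q ^ (-(2 * (n : ℤ) + 2 * ((j : ℕ) : ℤ) + 2)))
              (q ^ (-(2 * (L : ℤ) + 2))) k (j : ℕ)) *
        (C (q ^ 2) (q ^ (-(2 * (k : ℤ)))) (k - (i : ℕ)) *
          C (q ^ 2) (q ^ (2 * (k : ℤ) + 2)) (n + (j : ℕ) - k))

/-- Evaluation of the matrix-valued polynomial `P_n` at a point. -/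
def evP (q : ℂ) (L : ℕ) (C : ℂ → ℂ → ℕ → Polynomial ℂ) (n : ℕ) (x : ℂ) :
    Matrix (Fin (L + 1)) (Fin (L + 1)) ℂ :=
  (Pm q L C n).map (Polynomial.eval x)

/-- The coefficients `α_t(m,n)` of the weight. -/
def alphaC (q : ℂ) (L m n t : ℕ) : ℂ :=
  q ^ (2 * (n : ℤ) * ((L : ℤ) + 1) - (n : ℤ) ^ 2 - (2 * (L : ℤ) + 3) * (t : ℤ) + (t : ℤ) ^ 2 -
      (L : ℤ) + (m : ℤ)) *
    ((1 - q ^ (2 * (L : ℤ) + 2)) / (1 - q ^ (2 * (m : ℤ) + 2))) *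
    (qp (q ^ 2) (q ^ 2) (L - n) * qp (q ^ 2) (q ^ 2) n / qp (q ^ 2) (q ^ 2) L) *
    ((-1 : ℂ) ^ ((m : ℤ) - (t : ℤ)) * qp (q ^ (2 * (m : ℤ) - 2 * (L : ℤ))) (q ^ 2) (n - t) /
      qp (q ^ (2 * (m : ℤ) + 4)) (q ^ 2) (n - t)) *
    (qp (q ^ (2 * (L : ℤ) + 4 - 2 * (t : ℤ))) (q ^ 2) t / qp (q ^ 2) (q ^ 2) t)

/-- The matrix weight `W(x)`. -/
def Wm (q : ℂ) (L : ℕ) (x : ℂ) : Matrix (Fin (L + 1)) (Fin (L + 1)) ℂ :=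
  Matrix.of fun i j =>
    ∑ t ∈ Finset.range (max (i : ℕ) (j : ℕ) + 1),
      alphaC q L (min (i : ℕ) (j : ℕ)) (max (i : ℕ) (j : ℕ)) t *
        (Polynomial.Chebyshev.U ℂ
            ((min (i : ℕ) (j : ℕ) : ℤ) + (max (i : ℕ) (j : ℕ) : ℤ) - 2 * (t : ℤ))).eval x

/-- The antidiagonal involution `J`. -/
def Jm (L : ℕ) : Matrix (Fin (L + 1)) (Fin (L + 1)) ℂ :=
  Matrix.of fun i j => if (i : ℕ) + (j : ℕ) = L then 1 else 0

/-- The diagonal leading-coefficient matrix `Γ_n`. -/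
def Gam (q : ℂ) (L n : ℕ) : Matrix (Fin (L + 1)) (Fin (L + 1)) ℂ :=
  Matrix.diagonal fun i =>
    2 ^ n * q ^ n * qp (q ^ (2 * ((i : ℕ) : ℤ) + 2)) (q ^ 2) n *
        qp (q ^ (2 * (L : ℤ) - 2 * ((i : ℕ) : ℤ) + 2)) (q ^ 2) n /
      (qp (q ^ 2) (q ^ 2) n * qp (q ^ (2 * (L : ℤ) + 4)) (q ^ 2) n)

/-- The squared-norm matrix `G_m`. -/
def Gmat (q : ℂ) (L m : ℕ) : Matrix (Fin (L + 1)) (Fin (L + 1)) ℂ :=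
  Matrix.diagonal fun i =>
    q ^ (2 * (m : ℤ) - (L : ℤ)) * (1 - q ^ (2 * (L : ℤ) + 2)) ^ 2 /
      ((1 - q ^ (2 * (m : ℤ) + 2 * ((i : ℕ) : ℤ) + 2)) *
        (1 - q ^ (2 * (L : ℤ) - 2 * ((i : ℕ) : ℤ) + 2 * (m : ℤ) + 2)))

/-- The unipotent lower triangular matrix `L(x)` of the LDU decomposition. -/
def Lm (q : ℂ) (L : ℕ) (C : ℂ → ℂ → ℕ → Polynomial ℂ) (x : ℂ) :
    Matrix (Fin (L + 1)) (Fin (L + 1)) ℂ :=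
  Matrix.of fun m k =>
    if (k : ℕ) ≤ (m : ℕ) then
      q ^ (((m : ℕ) : ℤ) - ((k : ℕ) : ℤ)) * qp (q ^ 2) (q ^ 2) (m : ℕ) *
          qp (q ^ 2) (q ^ 2) (2 * (k : ℕ) + 1) /
          (qp (q ^ 2) (q ^ 2) ((m : ℕ) + (k : ℕ) + 1) * qp (q ^ 2) (q ^ 2) (k : ℕ)) *
        (C (q ^ 2) (q ^ (2 * (k : ℕ) + 2)) ((m : ℕ) - (k : ℕ))).eval x
    else 0

/-- The claimed inverse of `L(x)`. -/
def Linv (q : ℂ) (L : ℕ) (C : ℂ → ℂ → ℕ → Polynomial ℂ) (x : ℂ) :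
    Matrix (Fin (L + 1)) (Fin (L + 1)) ℂ :=
  Matrix.of fun k n =>
    if (n : ℕ) ≤ (k : ℕ) then
      q ^ ((2 * ((k : ℕ) : ℤ) + 1) * (((k : ℕ) : ℤ) - ((n : ℕ) : ℤ))) *
          qp (q ^ 2) (q ^ 2) (k : ℕ) * qp (q ^ 2) (q ^ 2) ((k : ℕ) + (n : ℕ)) /
          (qp (q ^ 2) (q ^ 2) (2 * (k : ℕ)) * qp (q ^ 2) (q ^ 2) (n : ℕ)) *
        (C (q ^ 2) (q ^ (-(2 * ((k : ℕ) : ℤ)))) ((k : ℕ) - (n : ℕ))).eval x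
    else 0

/-- The constants `c_k(ℓ)`. -/
def ckC (q : ℂ) (L k : ℕ) : ℂ :=
  q ^ (-(L : ℤ)) / 4 * (1 - q ^ (4 * k + 2)) * qp (q ^ 2) (q ^ 2) (L + k + 1) *
      qp (q ^ 2) (q ^ 2) (L - k) * qp (q ^ 2) (q ^ 2) k ^ 4 /
    (qp (q ^ 2) (q ^ 2) (2 * k + 1) ^ 2 * qp (q ^ 2) (q ^ 2) L ^ 2)

/-- The diagonal part `T(x)` of the LDU decomposition. -/
def Tm (q : ℂ) (L : ℕ) (x : ℂ) : Matrix (Fin (L + 1)) (Fin (L + 1)) ℂ :=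
  Matrix.diagonal fun k =>
    ckC q L (k : ℕ) *
      (4 * ∏ j ∈ Finset.Icc 1 (k : ℕ), (1 - 2 * (2 * x ^ 2 - 1) * q ^ (2 * j) + q ^ (4 * j)))

/-- The coefficient matrix `M₁(z)` of the q-difference operator `D₁`. -/
def M1f (q : ℂ) (L : ℕ) (z : ℂ) : Matrix (Fin (L + 1)) (Fin (L + 1)) ℂ :=
  Matrix.of fun i j =>
    if (j : ℕ) = (i : ℕ) + 1 then
      -(q ^ (1 - ((i : ℕ) : ℤ)) * (1 - q ^ (2 * (i : ℕ) + 2)) / (1 - q ^ 2) ^ 2 *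
        (z / (1 - z ^ 2)))
    else if (j : ℕ) = (i : ℕ) then
      q ^ (1 - ((i : ℕ) : ℤ)) / (1 - q ^ 2) ^ 2 *
        ((1 - q ^ (2 * (i : ℕ) + 2) * z ^ 2) / (1 - z ^ 2))
    else 0

/-- `M₂(z) = J M₁(z) J`. -/
def M2f (q : ℂ) (L : ℕ) (z : ℂ) : Matrix (Fin (L + 1)) (Fin (L + 1)) ℂ :=
  Jm L * M1f q L z * Jm L

/-- The eigenvalue matrix `Λ_n(1)`. -/
def Lam1 (q : ℂ) (L n : ℕ) : Matrix (Fin (L + 1)) (Fin (L + 1)) ℂ :=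
  Matrix.diagonal fun j =>
    (q ^ (-((j : ℕ) : ℤ) - (n : ℤ) - 1) + q ^ (((j : ℕ) : ℤ) + (n : ℤ) + 1)) / (q⁻¹ - q) ^ 2

/-- The eigenvalue matrix `Λ_n(2) = J Λ_n(1) J`. -/
def Lam2 (q : ℂ) (L n : ℕ) : Matrix (Fin (L + 1)) (Fin (L + 1)) ℂ :=
  Jm L * Lam1 q L n * Jm L

/-- The diagonal coefficient matrix `K₁(z)` of the decoupled operator. -/
def K1f (q : ℂ) (L : ℕ) (z : ℂ) : Matrix (Fin (L + 1)) (Fin (L + 1)) ℂ :=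
  Matrix.diagonal fun i =>
    q ^ (1 - ((i : ℕ) : ℤ)) / (1 - q ^ 2) ^ 2 *
      ((1 - q ^ (2 * (i : ℕ) + 2) * z ^ 2) / (1 - z ^ 2))

/-- The symmetric Laurent polynomial `Ĉ_k(z;β|p)`. -/
def Chat (p β : ℂ) (k : ℕ) (z : ℂ) : ℂ :=
  ∑ r ∈ Finset.range (k + 1),
    qp β p r * qp β p (k - r) / (qp p p r * qp p p (k - r)) * z ^ ((k : ℤ) - 2 * (r : ℤ))

/-- The matrix polynomials `R_n(x) = L(x)ᵀ P_n(x) Γ_n⁻¹`. -/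
def Rmat (q : ℂ) (L : ℕ) (C : ℂ → ℂ → ℕ → Polynomial ℂ) (n : ℕ) (x : ℂ) :
    Matrix (Fin (L + 1)) (Fin (L + 1)) ℂ :=
  (Lm q L C x)ᵀ * evP q L C n x * (Gam q L n)⁻¹



theorem qp_succ (a p : ℂ) (n : ℕ) : qp a p (n+1) = qp a p n * (1 - a * p ^ n) := by
  simp [qp, Finset.prod_range_succ]

theorem qp_succ' (a p : ℂ) (n : ℕ) : qp a p (n+1) = (1 - a) * qp (a * p) p n := by
  simp only [qp, Finset.prod_range_succ']
  rw [mul_comm]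
  congr 1
  · simp
  · refine Finset.prod_congr rfl fun j _ => ?_
    ring

theorem qp_zero (a p : ℂ) : qp a p 0 = 1 := by simp [qp]

theorem qp_add (a p : ℂ) (m n : ℕ) : qp a p (m + n) = qp a p m * qp (a * p ^ m) p n := by
  simp only [qp, Finset.prod_range_add]
  congr 1
  refine Finset.prod_congr rfl fun j _ => ?_
  ring

def Aser (p β u : ℂ) : PowerSeries ℂ := PowerSeries.mk fun r => qp β p r / qp p p r * u ^ r

theorem Aser_one (p u : ℂ) : Aser p 1 u = 1 := by
  ext r
  cases r with
  | zero => simp [Aser, qp_zero]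
  | succ r => simp [Aser, qp_succ', PowerSeries.coeff_one]

theorem Aser_mul1 (p β u : ℂ) (hp : ∀ r, qp p p r ≠ 0) :
    Aser p (β * p) u * (1 - PowerSeries.C (β * u) * PowerSeries.X) = Aser p β u := by
  ext r
  rw [mul_sub, mul_one, ← mul_assoc, mul_right_comm, map_sub]
  cases r with
  | zero => simp [Aser, qp_zero]
  | succ r =>
    have h1 := hp r
    have h2 := hp (r+1)
    rw [PowerSeries.coeff_mul_C, PowerSeries.coeff_succ_mul_X]
    simp only [Aser, PowerSeries.coeff_mk]
    have h3 : 1 - p * p ^ r ≠ 0 := by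
      intro h; apply h2; rw [qp_succ, h, mul_zero]
    rw [qp_succ p, qp_succ' β, qp_succ (β * p)]
    field_simp
    ring

theorem Aser_mul2 (p β u : ℂ) (hp : ∀ r, qp p p r ≠ 0) :
    Aser p (β * p) u * (1 - PowerSeries.C u * PowerSeries.X) = Aser p β (p * u) := by
  ext r
  rw [mul_sub, mul_one, ← mul_assoc, mul_right_comm, map_sub]
  cases r with
  | zero => simp [Aser, qp_zero]
  | succ r =>
    have h1 := hp r
    have h2 := hp (r+1)
    rw [PowerSeries.coeff_mul_C, PowerSeries.coeff_succ_mul_X]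
    simp only [Aser, PowerSeries.coeff_mk]
    have h3 : 1 - p * p ^ r ≠ 0 := by
      intro h; apply h2; rw [qp_succ, h, mul_zero]
    rw [qp_succ p, qp_succ' β, qp_succ (β * p)]
    field_simp
    ring

theorem Aser_inv (p : ℂ) (hp0 : p ≠ 0) (hp : ∀ r, qp p p r ≠ 0) (k : ℕ) : ∀ u : ℂ,
    Aser p ((p ^ k)⁻¹) (p ^ k * u) * Aser p (p ^ k) u = 1 := by
  induction k with
  | zero => intro u; simp [Aser_one]
  | succ k ih =>
    intro u
    have h1 := Aser_mul1 p ((p ^ (k+1))⁻¹) (p ^ (k+1) * u) hp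
    have h2 := Aser_mul2 p (p ^ k) u hp
    have e1 : (p ^ (k+1))⁻¹ * p = (p ^ k)⁻¹ := by rw [pow_succ]; field_simp
    have e2 : (p ^ (k+1))⁻¹ * (p ^ (k+1) * u) = u := by field_simp
    have e3 : p ^ (k+1) * u = p ^ k * (p * u) := by ring
    rw [e1, e2] at h1
    have h3 := ih (p * u)
    rw [← h2, ← pow_succ, ← e3] at h3
    rw [← h1]
    linear_combination h3

def Fser (p β u v : ℂ) : PowerSeries ℂ := Aser p β u * Aser p β v

theorem coeff_Fser_scale (p β u v c : ℂ) (s : ℕ) :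
    PowerSeries.coeff s (Fser p β (c * u) (c * v)) = c ^ s * PowerSeries.coeff s (Fser p β u v) := by
  have h : ∀ w, Aser p β (c * w) = PowerSeries.rescale c (Aser p β w) := by
    intro w; ext r; simp [Aser, PowerSeries.coeff_rescale]; ring
  rw [Fser, h, h, ← map_mul, PowerSeries.coeff_rescale, Fser]

def Hser (p u v c : ℂ) (M : ℕ) (β : ℂ) : PowerSeries ℂ :=
  PowerSeries.mk fun s => qp (c * p ^ s) p M * PowerSeries.coeff s (Fser p β u v)

theorem Fser_rec (p u v c β : ℂ) (huv : u * v = 1) (hp : ∀ r, qp p p r ≠ 0) :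
    Fser p β u v - PowerSeries.C c * Fser p β (p * u) (p * v) =
      PowerSeries.C (1 - c) * Fser p (β * p) u v
      - PowerSeries.C ((β - c) * (u + v)) * (Fser p (β * p) u v * PowerSeries.X)
      + PowerSeries.C (β ^ 2 - c) * (Fser p (β * p) u v * PowerSeries.X * PowerSeries.X) := by
  simp only [Fser]
  rw [← Aser_mul1 p β u hp, ← Aser_mul1 p β v hp, ← Aser_mul2 p β u hp, ← Aser_mul2 p β v hp]
  have h : (PowerSeries.C u * PowerSeries.C v : PowerSeries ℂ) = 1 := by
    rw [← map_mul, huv, map_one]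
  simp only [map_sub, map_mul, map_add, map_one, map_pow]
  linear_combination (Aser p (β * p) u * Aser p (β * p) v * PowerSeries.X ^ 2 *
    (PowerSeries.C β ^ 2 - PowerSeries.C c)) * h

theorem coeff_comb (a b d : ℂ) (A B D : PowerSeries ℂ) (s : ℕ) :
    PowerSeries.coeff s (PowerSeries.C a * A - PowerSeries.C b * B + PowerSeries.C d * D) =
      a * PowerSeries.coeff s A - b * PowerSeries.coeff s B + d * PowerSeries.coeff s D := by
  simp only [map_sub, map_add, PowerSeries.coeff_C_mul]

theorem Hser_rec (p u v c β : ℂ) (M : ℕ) (huv : u * v = 1) (hp : ∀ r, qp p p r ≠ 0) :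
    Hser p u v c (M+1) β =
      PowerSeries.C (1 - c) * Hser p u v (c * p) M (β * p)
      - PowerSeries.C ((β - c) * (u + v)) * (Hser p u v (c * p ^ 2) M (β * p) * PowerSeries.X)
      + PowerSeries.C (β ^ 2 - c) *
        (Hser p u v (c * p ^ 3) M (β * p) * PowerSeries.X * PowerSeries.X) := by
  ext s
  have h := congrArg (PowerSeries.coeff s) (Fser_rec p u v c β huv hp)
  rw [coeff_comb, map_sub, PowerSeries.coeff_C_mul, coeff_Fser_scale] at h
  rw [coeff_comb]
  rw [Hser, PowerSeries.coeff_mk, qp_succ']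
  have h' : (1 - c * p ^ s) * PowerSeries.coeff s (Fser p β u v) = _ :=
    Eq.trans (by ring) h
  rw [mul_right_comm, h']
  rcases s with _ | _ | s
  · simp [Hser]
    ring
  · simp only [PowerSeries.coeff_succ_mul_X, PowerSeries.coeff_zero_mul_X, Hser,
      PowerSeries.coeff_mk]
    have e1 : c * p ^ (0+1) * p = c * p ^ 2 := by ring
    have e2 : c * p * p ^ (0+1) = c * p ^ 2 := by ring
    rw [e1, e2, pow_zero, mul_one]
    ring
  · simp only [PowerSeries.coeff_succ_mul_X, Hser, PowerSeries.coeff_mk]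
    have e1 : c * p ^ (s+1+1) * p = c * p ^ (s+3) := by ring
    have e2 : c * p * p ^ (s+1+1) = c * p ^ (s+3) := by ring
    have e3 : c * p^2 * p ^ (s+1) = c * p ^ (s+3) := by ring
    have e4 : c * p^3 * p ^ (s) = c * p ^ (s+3) := by ring
    rw [e1, e2, e3, e4]
    ring

theorem Hser_deg (p u v : ℂ) (huv : u * v = 1) (hp : ∀ r, qp p p r ≠ 0)
    (G : PowerSeries ℂ) (M : ℕ) : ∀ (j : ℕ) (β c : ℂ), c * p ^ j = β ^ 2 →
      G * Fser p (β * p ^ M) u v = 1 → ∀ n, M + j < n →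
      PowerSeries.coeff n (G * Hser p u v c M β) = 0 := by
  induction M with
  | zero =>
    intro j β c _ hG n hn
    have : Hser p u v c 0 β = Fser p (β * p ^ 0) u v := by
      ext s; simp [Hser, qp_zero]
    rw [this, hG, PowerSeries.coeff_one, if_neg (by omega)]
  | succ M ih =>
    intro j β c hc hG n hn
    have hG' : G * Fser p (β * p * p ^ M) u v = 1 := by
      rw [← hG]; congr 2; ring
    obtain ⟨n, rfl⟩ : ∃ m, n = m + 2 := ⟨n - 2, by omega⟩
    rw [Hser_rec p u v c β M huv hp]
    have h1 := ih (j+1) (β * p) (c * p) (by rw [mul_pow, ← hc]; ring) hG' (n+2) (by omega)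
    have h2 := ih j (β * p) (c * p^2) (by rw [mul_pow, ← hc]; ring) hG' (n+1) (by omega)
    have h3 : (β ^ 2 - c) * PowerSeries.coeff n (G * Hser p u v (c * p ^ 3) M (β * p)) = 0 := by
      cases j with
      | zero => simp at hc; simp [hc]
      | succ j =>
        rw [ih j (β * p) (c * p^3) (by rw [mul_pow, ← hc]; ring) hG' n (by omega), mul_zero]
    have e : ∀ a b d (A B D : PowerSeries ℂ), G * (PowerSeries.C a * A - PowerSeries.C b *
        (B * PowerSeries.X) + PowerSeries.C d * (D * PowerSeries.X * PowerSeries.X)) =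
        PowerSeries.C a * (G * A) - PowerSeries.C b * ((G * B) * PowerSeries.X) +
         PowerSeries.C d * ((G * D) * PowerSeries.X * PowerSeries.X) := by
      intros; ring
    rw [e, coeff_comb, PowerSeries.coeff_succ_mul_X, PowerSeries.coeff_succ_mul_X,
      PowerSeries.coeff_succ_mul_X, h1, h2, h3]
    simp

theorem coeff_Fser_eq (C : ℂ → ℂ → ℕ → Polynomial ℂ) (hC : IsUltra C) (p β z : ℂ) (hz : z ≠ 0)
    (n : ℕ) : PowerSeries.coeff n (Fser p β z z⁻¹) = (C p β n).eval ((z + z⁻¹) / 2) := by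
  rw [(hC p β n).2 z hz, Fser, PowerSeries.coeff_mul, Finset.Nat.sum_antidiagonal_eq_sum_range_succ_mk,
    ← Finset.sum_range_reflect]
  refine Finset.sum_congr rfl fun r hr => ?_
  have hr' : r ≤ n := by simpa [Nat.lt_succ_iff] using hr
  have e1 : n + 1 - 1 - r = n - r := by omega
  have e2 : n - (n - r) = r := by omega
  simp only [Aser, PowerSeries.coeff_mk, e1, e2]
  have e3 : z ^ ((n:ℤ) - 2 * r) = z ^ (n - r) * z⁻¹ ^ r := by
    rw [inv_pow, ← zpow_natCast, ← zpow_natCast, ← _root_.zpow_neg, ← zpow_add₀ hz]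
    congr 1; push_cast [hr']; ring
  rw [e3]
  ring

theorem exists_z (x : ℂ) : ∃ z : ℂ, z ≠ 0 ∧ (z + z⁻¹) / 2 = x := by
  obtain ⟨s, hs⟩ := IsAlgClosed.exists_pow_nat_eq (x ^ 2 - 1) (n := 2) (by norm_num)
  have h : (x + s) * (x - s) = 1 := by linear_combination -hs
  refine ⟨x + s, left_ne_zero_of_mul_eq_one h, ?_⟩
  rw [inv_eq_of_mul_eq_one_right h]; ring

theorem key_sum (C : ℂ → ℂ → ℕ → Polynomial ℂ) (hC : IsUltra C) (p : ℂ) (hp0 : p ≠ 0)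
    (hp : ∀ r, qp p p r ≠ 0) (x : ℂ) (i M : ℕ) :
    ∑ s ∈ Finset.range (M + 2), (p ^ (i + 1 + M)) ^ (M + 1 - s) *
      (C p ((p ^ (i + 1 + M))⁻¹) (M + 1 - s)).eval x *
      (qp (p ^ (2 * i + 2 + s)) p M * (C p (p ^ (i + 1)) s).eval x) = 0 := by
  obtain ⟨z, hz, rfl⟩ := exists_z x
  set k := i + 1 + M with hk
  have hG : Fser p ((p ^ k)⁻¹) (p ^ k * z) (p ^ k * z⁻¹) * Fser p (p ^ (i+1) * p ^ M) z z⁻¹ = 1 := by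
    rw [← pow_add, ← hk, Fser, Fser, mul_mul_mul_comm, Aser_inv p hp0 hp, Aser_inv p hp0 hp, one_mul]
  have := Hser_deg p z z⁻¹ (mul_inv_cancel₀ hz) hp _ M 0 (p ^ (i+1)) (p ^ (2 * i + 2)) (by ring)
    hG (M+1) (by omega)
  rw [mul_comm, PowerSeries.coeff_mul, Finset.Nat.sum_antidiagonal_eq_sum_range_succ_mk] at this
  rw [← this]
  refine Finset.sum_congr rfl fun s _ => ?_
  simp only [Hser, PowerSeries.coeff_mk, coeff_Fser_scale, coeff_Fser_eq C hC _ _ _ hz]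
  rw [← pow_add]
  ring

theorem Linv_mul (q : ℂ) (hq : q ≠ 0) (hp : ∀ r, qp (q ^ 2) (q ^ 2) r ≠ 0) (L : ℕ)
    (C : ℂ → ℂ → ℕ → Polynomial ℂ) (hC : IsUltra C) (x : ℂ) :
    Linv q L C x * Lm q L C x = 1 := by
  have hC0 : ∀ p β, (C p β 0).eval x = 1 := by
    intro p β
    obtain ⟨z, hz, rfl⟩ := exists_z x
    rw [(hC p β 0).2 z hz]; simp [qp_zero]
  ext k i
  rw [Matrix.mul_apply, Matrix.one_apply]
  have hk := k.2
  rcases lt_trichotomy (k : ℕ) (i : ℕ) with h | h | h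
  · rw [if_neg (by rintro rfl; omega)]
    refine Finset.sum_eq_zero fun m _ => ?_
    simp only [Linv, Lm, Matrix.of_apply]
    split_ifs <;> first | omega | simp
  · obtain rfl : k = i := Fin.ext h
    rw [if_pos rfl, Finset.sum_eq_single k]
    · simp only [Linv, Lm, Matrix.of_apply, le_refl, if_true, sub_self, mul_zero, zpow_zero,
        Nat.sub_self, hC0, mul_one, one_mul]
      have h1 := hp k
      have h2 := hp (2 * k)
      have h3 := hp (2 * k + 1)
      rw [← two_mul]
      field_simp
    · intro m _ hm
      have : (m : ℕ) ≠ k := fun h => hm (Fin.ext h)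
      simp only [Linv, Lm, Matrix.of_apply]
      split_ifs <;> first | omega | simp
    · simp
  · rw [if_neg (by rintro rfl; omega)]
    obtain ⟨M, hM⟩ : ∃ M, (k : ℕ) = i + 1 + M := ⟨k - (i + 1), by omega⟩
    have key := key_sum C hC (q ^ 2) (by positivity) hp x i M
    set f : ℕ → ℂ := fun m => if (m : ℕ) ≤ k ∧ (i : ℕ) ≤ m then
      (q ^ ((2 * ((k : ℕ) : ℤ) + 1) * (((k : ℕ) : ℤ) - (m : ℤ))) *
          qp (q ^ 2) (q ^ 2) (k : ℕ) * qp (q ^ 2) (q ^ 2) ((k : ℕ) + m) /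
          (qp (q ^ 2) (q ^ 2) (2 * (k : ℕ)) * qp (q ^ 2) (q ^ 2) m) *
        (C (q ^ 2) (q ^ (-(2 * ((k : ℕ) : ℤ)))) ((k : ℕ) - m)).eval x) *
       (q ^ ((m : ℤ) - ((i : ℕ) : ℤ)) * qp (q ^ 2) (q ^ 2) m *
          qp (q ^ 2) (q ^ 2) (2 * (i : ℕ) + 1) /
          (qp (q ^ 2) (q ^ 2) (m + (i : ℕ) + 1) * qp (q ^ 2) (q ^ 2) (i : ℕ)) *
        (C (q ^ 2) (q ^ (2 * (i : ℕ) + 2)) (m - (i : ℕ))).eval x) else 0 with hf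
    have e : ∀ m : Fin (L+1), Linv q L C x k m * Lm q L C x m i = f m := by
      intro m
      simp only [Linv, Lm, Matrix.of_apply, hf]
      by_cases h1 : (m : ℕ) ≤ k <;> by_cases h2 : (i : ℕ) ≤ m <;> simp [h1, h2]
    rw [Finset.sum_congr rfl fun m _ => e m, Fin.sum_univ_eq_sum_range f (L+1)]
    have e2 : ∑ m ∈ Finset.range (L+1), f m = ∑ m ∈ Finset.Ico (i : ℕ) (i + (M + 2)), f m := by
      symm
      apply Finset.sum_subset
      · intro m; simp only [Finset.mem_Ico, Finset.mem_range]; omega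
      · intro m _; simp only [Finset.mem_Ico, hf]; intro hm; rw [if_neg]; omega
    rw [e2, Finset.sum_Ico_eq_sum_range, Nat.add_sub_cancel_left]
    rw [← mul_zero (q ^ (M+1) * qp (q ^ 2) (q ^ 2) k * qp (q ^ 2) (q ^ 2) (2 * (i : ℕ) + 1) /
      (qp (q ^ 2) (q ^ 2) (2 * (k : ℕ)) * qp (q ^ 2) (q ^ 2) (i : ℕ))), ← key, Finset.mul_sum]
    refine Finset.sum_congr rfl fun s hs => ?_
    rw [Finset.mem_range] at hs
    simp only [hf]
    rw [if_pos (by omega)]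
    have h1 : (q ^ 2) ^ (i + 1 + M) = q ^ (2 * (k : ℕ)) := by rw [← hM, pow_mul]
    have h2 : q ^ (-(2 * ((k : ℕ) : ℤ))) = (q ^ (2 * (k : ℕ)))⁻¹ := by
      rw [_root_.zpow_neg]; norm_cast
    have h3 : (k : ℕ) - (i + s) = M + 1 - s := by omega
    have h4 : (i : ℕ) + s - i = s := by omega
    have h5 : q ^ (2 * (i : ℕ) + 2) = (q ^ 2) ^ ((i : ℕ) + 1) := by ring
    have h6 : qp (q ^ 2) (q ^ 2) ((k : ℕ) + (i + s)) =
        qp (q ^ 2) (q ^ 2) ((i : ℕ) + s + i + 1) * qp ((q ^ 2) ^ (2 * (i : ℕ) + 2 + s)) (q ^ 2) M := by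
      have : (k : ℕ) + (i + s) = ((i : ℕ) + s + i + 1) + M := by omega
      rw [this, qp_add]; congr 2; ring
    have h7 : q ^ ((2 * ((k : ℕ) : ℤ) + 1) * (((k : ℕ) : ℤ) - ((i + s : ℕ) : ℤ))) =
        (q ^ (2 * (k : ℕ))) ^ (M + 1 - s) * q ^ (M + 1 - s) := by
      rw [← pow_mul, ← pow_add, ← zpow_natCast]; congr 1
      have : ((M + 1 - s : ℕ) : ℤ) = (k : ℤ) - (i + s : ℕ) := by omega
      push_cast [this]; ring
    have h8 : q ^ (((i + s : ℕ) : ℤ) - ((i : ℕ) : ℤ)) = q ^ s := by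
      rw [← zpow_natCast]; congr 1; push_cast; ring
    have h9 : q ^ (M + 1) = q ^ (M + 1 - s) * q ^ s := by rw [← pow_add]; congr 1; omega
    rw [h1, h2, h3, h4, h5, h6, h7, h8, h9]
    have g1 := hp (i + s)
    have g2 := hp (i + s + i + 1)
    have g3 := hp (2 * k)
    have g4 := hp i
    generalize (q ^ (2 * (k : ℕ)))⁻¹ = y
    field_simp

theorem qp_pos_ne (q : ℝ) (hq0 : 0 < q) (hq1 : q < 1) (m n : ℕ) :
    qp ((q : ℂ) ^ (m + 1)) ((q : ℂ) ^ 2) n ≠ 0 := by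
  rw [qp, Finset.prod_ne_zero_iff]
  intro j _ h
  have : (q : ℂ) ^ (m + 1 + 2 * j) = 1 := by rw [pow_add, pow_mul]; linear_combination -h
  have h2 : q ^ (m + 1 + 2 * j) = 1 := by exact_mod_cast this
  have h3 := pow_lt_one₀ hq0.le hq1 (n := m + 1 + 2 * j) (by omega)
  linarith

def Sm (q : ℂ) (L : ℕ) (C : ℂ → ℂ → ℕ → Polynomial ℂ) (n : ℕ) (x : ℂ) :
    Matrix (Fin (L + 1)) (Fin (L + 1)) ℂ :=
  Matrix.of fun k j => if (k : ℕ) ≤ n + (j : ℕ) then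
    (-1 : ℂ) ^ (k : ℕ) *
      q ^ ((n : ℤ) + (((j : ℕ) : ℤ) * (2 * ((k : ℕ) : ℤ) + 1) +
        2 * ((k : ℕ) : ℤ) * ((L : ℤ) + (n : ℤ) + 1) - ((k : ℕ) : ℤ) ^ 2)) *
            (qp (q ^ (-(2 * (L : ℤ)))) (q ^ 2) k *
                qp (q ^ (-(2 * ((j : ℕ) : ℤ) + 2 * (n : ℤ)))) (q ^ 2) k /
              (qp (q ^ 2) (q ^ 2) k * qp (q ^ (2 * (L : ℤ) + 4)) (q ^ 2) k)) *
            (qp (q ^ 2) (q ^ 2) (n + (j : ℕ) - k) /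
              qp (q ^ (4 * ((k : ℕ) : ℤ) + 4)) (q ^ 2) (n + (j : ℕ) - k)) *
            qRacah (q ^ 2) 1 1 (q ^ (-(2 * (n : ℤ) + 2 * ((j : ℕ) : ℤ) + 2)))
              (q ^ (-(2 * (L : ℤ) + 2))) k (j : ℕ) *
          (C (q ^ 2) (q ^ (2 * (k : ℕ) + 2)) (n + (j : ℕ) - k)).eval x
    else 0

theorem evP_eq (q : ℂ) (hq : q ≠ 0) (L : ℕ) (C : ℂ → ℂ → ℕ → Polynomial ℂ) (n : ℕ) (x : ℂ) :
    evP q L C n x = (Linv q L C x)ᵀ * Sm q L C n x := by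
  ext i j
  simp only [evP, Pm, Matrix.map_apply, Matrix.of_apply, Matrix.mul_apply, Matrix.transpose_apply,
    Linv, Sm, Polynomial.eval_finsetSum, Polynomial.eval_mul, Polynomial.eval_C]
  rw [← Finset.sum_filter_add_sum_filter_not Finset.univ
    (fun k : Fin (L+1) => (k : ℕ) ∈ Finset.Icc (i : ℕ) (min L (n + (j : ℕ))))]
  have z : ∀ a b : ℂ, b = 0 → a + b = a := by rintro a _ rfl; simp
  rw [z]
  · symm
    refine Finset.sum_bij (fun k _ => (k : ℕ)) ?_ ?_ ?_ ?_
    · intro k hk; exact (Finset.mem_filter.1 hk).2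
    · intro a _ b _ h; exact Fin.ext h
    · intro b hb
      have hb' := Finset.mem_Icc.1 hb
      exact ⟨⟨b, by omega⟩, Finset.mem_filter.2 ⟨Finset.mem_univ _, hb⟩, rfl⟩
    · intro k hk
      have hk' := Finset.mem_Icc.1 (Finset.mem_filter.1 hk).2
      rw [if_pos hk'.1, if_pos (by omega)]
      have e1 : q ^ ((n : ℤ) + (2 * ((k : ℕ) : ℤ) + 1) * (((k : ℕ) : ℤ) - ((i : ℕ) : ℤ)) +
                ((j : ℕ) : ℤ) * (2 * ((k : ℕ) : ℤ) + 1) +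
                2 * ((k : ℕ) : ℤ) * ((L : ℤ) + (n : ℤ) + 1) - ((k : ℕ) : ℤ) ^ 2) =
          q ^ ((2 * ((k : ℕ) : ℤ) + 1) * (((k : ℕ) : ℤ) - ((i : ℕ) : ℤ))) *
          q ^ ((n : ℤ) + (((j : ℕ) : ℤ) * (2 * ((k : ℕ) : ℤ) + 1) +
            2 * ((k : ℕ) : ℤ) * ((L : ℤ) + (n : ℤ) + 1) - ((k : ℕ) : ℤ) ^ 2)) := by
        rw [← zpow_add₀ hq]; congr 1; ring
      have e2 : q ^ (2 * ((k : ℕ) : ℤ) + 2) = q ^ (2 * (k : ℕ) + 2) := by norm_cast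
      rw [e1, e2]
      ring
  · refine Finset.sum_eq_zero fun k hk => ?_
    have hk' := (Finset.mem_filter.1 hk).2
    rw [Finset.mem_Icc] at hk'
    have := k.2
    by_cases h1 : (i : ℕ) ≤ k
    · rw [if_neg (by omega : ¬ (k : ℕ) ≤ n + j), mul_zero]
    · rw [if_neg h1, zero_mul]

/-- explicit formula for the entries of `R_n(x) = L(x)ᵀ P_n(x) Γ_n⁻¹`:
each entry is an explicit multiple of a single continuous q-ultraspherical polynomial,
and it vanishes identically when `i > n + j`. -/
theorem stmt13 (q : ℝ) (hq0 : 0 < q) (hq1 : q < 1) (L : ℕ)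
    (C : ℂ → ℂ → ℕ → Polynomial ℂ) (hC : IsUltra C) (n : ℕ) :
    ∀ (i j : Fin (L + 1)) (x : ℂ),
      Rmat (q : ℂ) L C n x i j =
        if (i : ℕ) ≤ n + (j : ℕ) then
          (-1 : ℂ) ^ (i : ℕ) * (2 : ℂ) ^ (-(n : ℤ)) *
            (q : ℂ) ^ (((j : ℕ) : ℤ) * (2 * ((i : ℕ) : ℤ) + 1) +
                2 * ((i : ℕ) : ℤ) * ((L : ℤ) + (n : ℤ) + 1) - ((i : ℕ) : ℤ) ^ 2) *
            (qp ((q : ℂ) ^ 2) ((q : ℂ) ^ 2) n *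
                qp ((q : ℂ) ^ (2 * (L : ℤ) + 4)) ((q : ℂ) ^ 2) n /
              (qp ((q : ℂ) ^ (2 * ((j : ℕ) : ℤ) + 2)) ((q : ℂ) ^ 2) n *
                qp ((q : ℂ) ^ (2 * (L : ℤ) - 2 * ((j : ℕ) : ℤ) + 2)) ((q : ℂ) ^ 2) n)) *
            (qp ((q : ℂ) ^ (-(2 * (L : ℤ)))) ((q : ℂ) ^ 2) (i : ℕ) *
                qp ((q : ℂ) ^ (-(2 * ((j : ℕ) : ℤ) + 2 * (n : ℤ)))) ((q : ℂ) ^ 2) (i : ℕ) /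
              (qp ((q : ℂ) ^ 2) ((q : ℂ) ^ 2) (i : ℕ) *
                qp ((q : ℂ) ^ (2 * (L : ℤ) + 4)) ((q : ℂ) ^ 2) (i : ℕ))) *
            (qp ((q : ℂ) ^ 2) ((q : ℂ) ^ 2) (n + (j : ℕ) - (i : ℕ)) /
              qp ((q : ℂ) ^ (4 * ((i : ℕ) : ℤ) + 4)) ((q : ℂ) ^ 2) (n + (j : ℕ) - (i : ℕ))) *
            qRacah ((q : ℂ) ^ 2) 1 1 ((q : ℂ) ^ (-(2 * (n : ℤ) + 2 * ((j : ℕ) : ℤ) + 2)))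
              ((q : ℂ) ^ (-(2 * (L : ℤ) + 2))) (i : ℕ) (j : ℕ) *
            (C ((q : ℂ) ^ 2) ((q : ℂ) ^ (2 * (i : ℕ) + 2)) (n + (j : ℕ) - (i : ℕ))).eval x
        else 0 := by
  intro i j x
  have hq : (q : ℂ) ≠ 0 := by exact_mod_cast hq0.ne'
  have hp : ∀ r, qp ((q : ℂ) ^ 2) ((q : ℂ) ^ 2) r ≠ 0 := qp_pos_ne q hq0 hq1 1
  have hg1 : qp ((q : ℂ) ^ (2 * (L : ℤ) + 4)) ((q : ℂ) ^ 2) n ≠ 0 := by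
    have := qp_pos_ne q hq0 hq1 (2 * L + 3) n
    exact_mod_cast this
  have hg2 : ∀ i : Fin (L+1), qp ((q : ℂ) ^ (2 * ((i : ℕ) : ℤ) + 2)) ((q : ℂ) ^ 2) n ≠ 0 := by
    intro i
    have := qp_pos_ne q hq0 hq1 (2 * i + 1) n
    exact_mod_cast this
  have hg3 : ∀ i : Fin (L+1),
      qp ((q : ℂ) ^ (2 * (L : ℤ) - 2 * ((i : ℕ) : ℤ) + 2)) ((q : ℂ) ^ 2) n ≠ 0 := by
    intro i
    have := qp_pos_ne q hq0 hq1 (2 * (L - i) + 1) n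
    have e : (2 * (L : ℤ) - 2 * ((i : ℕ) : ℤ) + 2) = ((2 * (L - i) + 1 + 1 : ℕ) : ℤ) := by omega
    rw [e, zpow_natCast]
    exact this
  have hR : Rmat (q : ℂ) L C n x = Sm (q : ℂ) L C n x * (Gam (q : ℂ) L n)⁻¹ := by
    rw [Rmat, evP_eq _ hq, ← Matrix.mul_assoc, ← Matrix.transpose_mul, Linv_mul _ hq hp L C hC,
      Matrix.transpose_one, Matrix.one_mul]
  have hGi : (Gam (q : ℂ) L n)⁻¹ = Matrix.diagonal fun i : Fin (L + 1) => (2 ^ n * (q : ℂ) ^ n *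
      qp ((q : ℂ) ^ (2 * ((i : ℕ) : ℤ) + 2)) ((q : ℂ) ^ 2) n *
        qp ((q : ℂ) ^ (2 * (L : ℤ) - 2 * ((i : ℕ) : ℤ) + 2)) ((q : ℂ) ^ 2) n /
      (qp ((q : ℂ) ^ 2) ((q : ℂ) ^ 2) n * qp ((q : ℂ) ^ (2 * (L : ℤ) + 4)) ((q : ℂ) ^ 2) n))⁻¹ := by
    apply Matrix.inv_eq_right_inv
    rw [Gam, Matrix.diagonal_mul_diagonal, ← Matrix.diagonal_one]
    congr 1
    funext i
    apply mul_inv_cancel₀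
    have h1 := hp n
    have h2 := hg2 i
    have h3 := hg3 i
    have h4 : (2 : ℂ) ^ n ≠ 0 := by positivity
    exact div_ne_zero (mul_ne_zero (mul_ne_zero (mul_ne_zero h4 (pow_ne_zero _ hq)) h2) h3)
      (mul_ne_zero h1 hg1)
  rw [hR, hGi, Matrix.mul_diagonal]
  simp only [Sm, Matrix.of_apply]
  split_ifs with h
  · rw [zpow_add₀ hq, zpow_natCast, _root_.zpow_neg (2 : ℂ), zpow_natCast, inv_div]
    have h4 : ((q : ℂ) ^ n) * ((q : ℂ) ^ n)⁻¹ = 1 := mul_inv_cancel₀ (pow_ne_zero _ hq)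
    simp only [div_eq_mul_inv, mul_inv]
    generalize ((q : ℂ) ^ n)⁻¹ = w at h4 ⊢
    generalize (q : ℂ) ^ n = w' at h4 ⊢
    have e : ∀ A B : ℂ, A = (w' * w) * B → A = B := by
      intro A B hAB
      rw [hAB, h4, one_mul]
    apply e
    ring
  · simp

end
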